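/- Appendix Lemma (coercivity of the relative entropy in the difference variables): Assume ψ̂ ∈ C³(ℝ^{19} × (0,∞)) satisfies the growth conditions, that ∇²_ξ ψ̂(ξ,θ) is positive definite and ∂_θ η̂(ξ,θ) > 0 for all (ξ,θ), and let M, δ > 0. Then there exist R = R(M,δ) and constants K₁, K₂ > 0 such that for every (ξ,v,θ) ∈ ℝ^{19} × ℝ³ × (0,∞) with ξ = (F,ζ,w) and every (ξ̄,v̄,θ̄) ∈ Γ_{M,δ}: I(ξ,v,θ|ξ̄,v̄,θ̄) ≥ (K₁/4)(|ξ − ξ̄|_{p,q,r} + |θ − θ̄|^ℓ + |v − v̄|²) whenever |ξ|_{p,q,r} + θ^ℓ + |v|² > R, and I(ξ,v,θ|ξ̄,v̄,θ̄) ≥ K₂(|F − F̄|² + |ζ − ζ̄|² + |w − w̄|² + |θ − θ̄|² + |v − v̄|²) whenever |ξ|_{p,q,r} + θ^ℓ + |v|² ≤ R. -/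

import Mathlib

open Real MeasureTheory Filter Set Topology ENNReal NNReal

noncomputable section

abbrev Vec3 := Fin 3 → ℝ
abbrev Mat3 := Fin 3 → Fin 3 → ℝ
abbrev Xi := Mat3 × Mat3 × ℝ
abbrev Idx := (Fin 3 × Fin 3) ⊕ ((Fin 3 × Fin 3) ⊕ Unit)
abbrev FullState := Xi × Vec3 × ℝ

/-- Levi-Civita symbol on three indices. -/
def eps3 (i j k : Fin 3) : ℝ :=
  if (i, j, k) = (0, 1, 2) ∨ (i, j, k) = (1, 2, 0) ∨ (i, j, k) = (2, 0, 1) then 1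
  else if (i, j, k) = (2, 1, 0) ∨ (i, j, k) = (1, 0, 2) ∨ (i, j, k) = (0, 2, 1) then -1
  else 0

/-- Cofactor matrix (cof F)_{iα} = (1/2) ε_{ijk} ε_{αβγ} F_{jβ} F_{kγ}. -/
def cof3 (F : Mat3) : Mat3 := fun i α =>
  (1/2) * ∑ j, ∑ k, ∑ β, ∑ γ, eps3 i j k * eps3 α β γ * F j β * F k γ

/-- det F = (1/6) ε_{ijk} ε_{αβγ} F_{iα} F_{jβ} F_{kγ}. -/
def det3 (F : Mat3) : ℝ :=
  (1/6) * ∑ i, ∑ j, ∑ k, ∑ α, ∑ β, ∑ γ,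
    eps3 i j k * eps3 α β γ * F i α * F j β * F k γ

/-- The vector of null Lagrangians Φ(F) = (F, cof F, det F). -/
def Phi3 (F : Mat3) : Xi := (F, cof3 F, det3 F)

/-- Component ξ^B of ξ ∈ ℝ^19. -/
def xiComp (ξ : Xi) : Idx → ℝ
  | .inl (i, α) => ξ.1 i α
  | .inr (.inl (i, α)) => ξ.2.1 i α
  | .inr (.inr _) => ξ.2.2

def updMat (F : Mat3) (i α : Fin 3) (s : ℝ) : Mat3 :=
  Function.update F i (Function.update (F i) α s)

/-- Update component B of ξ to value s. -/
def xiUpd (ξ : Xi) : Idx → ℝ → Xi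
  | .inl (i, α), s => (updMat ξ.1 i α s, ξ.2)
  | .inr (.inl (i, α)), s => (ξ.1, updMat ξ.2.1 i α s, ξ.2.2)
  | .inr (.inr _), s => (ξ.1, ξ.2.1, s)

/-- ∂Φ^B/∂F_{iα}(F). -/
def dPhi (B : Idx) (i α : Fin 3) (F : Mat3) : ℝ :=
  deriv (fun s => xiComp (Phi3 (updMat F i α s)) B) (F i α)

/-- Partial derivative ∂ψ̂/∂ξ^B of a function ψ̂(ξ, θ). -/
def dXi (B : Idx) (ψ : Xi → ℝ → ℝ) (ξ : Xi) (θ : ℝ) : ℝ :=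
  deriv (fun s => ψ (xiUpd ξ B s) θ) (xiComp ξ B)

/-- Partial derivative ∂ψ̂/∂θ. -/
def dTh (ψ : Xi → ℝ → ℝ) (ξ : Xi) (θ : ℝ) : ℝ :=
  deriv (fun s => ψ ξ s) θ

/-- η̂(ξ,θ) = −∂_θ ψ̂(ξ,θ). -/
def etaHat (ψ : Xi → ℝ → ℝ) (ξ : Xi) (θ : ℝ) : ℝ := -(dTh ψ ξ θ)

/-- ê(ξ,θ) = ψ̂(ξ,θ) − θ ∂_θ ψ̂(ξ,θ). -/
def eHat (ψ : Xi → ℝ → ℝ) (ξ : Xi) (θ : ℝ) : ℝ := ψ ξ θ - θ * dTh ψ ξ θ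

/-- Spatial partial derivative ∂_α of a space-time field. -/
def pdx (α : Fin 3) (f : Vec3 → ℝ → ℝ) (x : Vec3) (t : ℝ) : ℝ :=
  deriv (fun s => f (Function.update x α s) t) (x α)

/-- Time derivative ∂_t of a space-time field. -/
def pdt (f : Vec3 → ℝ → ℝ) (x : Vec3) (t : ℝ) : ℝ :=
  deriv (fun s => f x s) t

def mnorm (F : Mat3) : ℝ := Real.sqrt (∑ i, ∑ j, (F i j)^2)
def vnorm (v : Vec3) : ℝ := Real.sqrt (∑ i, (v i)^2)

/-- |ξ|_{p,q,r} = |F|^p + |ζ|^q + |w|^r. -/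
def xiNorm (p q r : ℝ) (ξ : Xi) : ℝ :=
  mnorm ξ.1 ^ p + mnorm ξ.2.1 ^ q + |ξ.2.2| ^ r

/-- The compact set Γ_{M,δ}. -/
def Gamma (M δ : ℝ) : Set FullState :=
  {U | mnorm U.1.1 ≤ M ∧ mnorm U.1.2.1 ≤ M ∧ |U.1.2.2| ≤ M ∧
       vnorm U.2.1 ≤ M ∧ δ ≤ U.2.2 ∧ U.2.2 ≤ M}

/-- Relative free energy ψ̂(ξ,θ|ξ̄,θ̄). -/
def psiRel (ψ : Xi → ℝ → ℝ) (ξ : Xi) (θ : ℝ) (ξ' : Xi) (θ' : ℝ) : ℝ :=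
  ψ ξ θ - ψ ξ' θ' - (∑ B : Idx, dXi B ψ ξ' θ' * (xiComp ξ B - xiComp ξ' B))
    + etaHat ψ ξ' θ' * (θ - θ')

/-- Relative entropy function η̂(ξ,θ|ξ̄,θ̄). -/
def etaRel (ψ : Xi → ℝ → ℝ) (ξ : Xi) (θ : ℝ) (ξ' : Xi) (θ' : ℝ) : ℝ :=
  etaHat ψ ξ θ - etaHat ψ ξ' θ'
    - (∑ B : Idx, dXi B (etaHat ψ) ξ' θ' * (xiComp ξ B - xiComp ξ' B))
    - dTh (etaHat ψ) ξ' θ' * (θ - θ')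

/-- Relative stress (∂ψ̂/∂ξ^B)(ξ,θ|ξ̄,θ̄). -/
def dXiRel (B : Idx) (ψ : Xi → ℝ → ℝ) (ξ : Xi) (θ : ℝ) (ξ' : Xi) (θ' : ℝ) : ℝ :=
  dXi B ψ ξ θ - dXi B ψ ξ' θ'
    - (∑ A : Idx, dXi A (dXi B ψ) ξ' θ' * (xiComp ξ A - xiComp ξ' A))
    - dTh (dXi B ψ) ξ' θ' * (θ - θ')

/-- Relative entropy I(ξ,v,θ|ξ̄,v̄,θ̄). -/
def relEnt (ψ : Xi → ℝ → ℝ) (ξ : Xi) (v : Vec3) (θ : ℝ)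
    (ξ' : Xi) (v' : Vec3) (θ' : ℝ) : ℝ :=
  psiRel ψ ξ θ ξ' θ' + (1/2) * (∑ i, (v i - v' i)^2)
    + (etaHat ψ ξ θ - etaHat ψ ξ' θ') * (θ - θ')

/-- ψ̂ is C³ on ℝ^19 × (0,∞). -/
def PsiC3 (ψ : Xi → ℝ → ℝ) : Prop :=
  ContDiffOn ℝ 3 (fun p : Xi × ℝ => ψ p.1 p.2) (Set.univ ×ˢ Set.Ioi (0:ℝ))

/-- ∇²_ξ ψ̂ > 0 and ∂_θ η̂ > 0. -/
def PsiConvex (ψ : Xi → ℝ → ℝ) : Prop :=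
  ∀ ξ : Xi, ∀ θ : ℝ, 0 < θ →
    (∀ u : Idx → ℝ, u ≠ 0 →
      0 < ∑ A : Idx, ∑ B : Idx, dXi A (dXi B ψ) ξ θ * u A * u B) ∧
    0 < dTh (etaHat ψ) ξ θ

def gradFnorm (ψ : Xi → ℝ → ℝ) (ξ : Xi) (θ : ℝ) : ℝ :=
  Real.sqrt (∑ i, ∑ α, (dXi (.inl (i, α)) ψ ξ θ)^2)
def gradZnorm (ψ : Xi → ℝ → ℝ) (ξ : Xi) (θ : ℝ) : ℝ :=
  Real.sqrt (∑ i, ∑ α, (dXi (.inr (.inl (i, α))) ψ ξ θ)^2)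
def gradWnorm (ψ : Xi → ℝ → ℝ) (ξ : Xi) (θ : ℝ) : ℝ :=
  |dXi (.inr (.inr ())) ψ ξ θ|

/-- The growth conditions (gr.con.1)-(gr.con.3). -/
def GrowthCond (ψ : Xi → ℝ → ℝ) (c p q r ℓ : ℝ) : Prop :=
  0 < c ∧
  (∀ ξ : Xi, ∀ θ : ℝ, 0 < θ →
    c * (xiNorm p q r ξ + θ ^ ℓ) - c ≤ eHat ψ ξ θ ∧
    eHat ψ ξ θ ≤ c * (xiNorm p q r ξ + θ ^ ℓ) + c) ∧
  (∀ ε : ℝ, 0 < ε → ∃ R : ℝ, ∀ ξ : Xi, ∀ θ : ℝ, 0 < θ →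
    R < xiNorm p q r ξ + θ ^ ℓ →
    gradFnorm ψ ξ θ + gradZnorm ψ ξ θ ^ (p/(p-1)) + gradWnorm ψ ξ θ ^ (p/(p-2))
      ≤ ε * (xiNorm p q r ξ + θ ^ ℓ)) ∧
  (∀ ε : ℝ, 0 < ε → ∃ R : ℝ, ∀ ξ : Xi, ∀ θ : ℝ, 0 < θ →
    R < xiNorm p q r ξ + θ ^ ℓ →
    |dTh ψ ξ θ| ≤ ε * (xiNorm p q r ξ + θ ^ ℓ))

/-- The augmented thermoviscoelasticity system with fields (Z, Q, r), at a point (x,t). -/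
def AugSys (ψ : Xi → ℝ → ℝ) (ξf : Vec3 → ℝ → Xi) (vf : Vec3 → ℝ → Vec3)
    (θf : Vec3 → ℝ → ℝ) (Z : Vec3 → ℝ → Mat3) (Q : Vec3 → ℝ → Vec3)
    (r : Vec3 → ℝ → ℝ) (x : Vec3) (t : ℝ) : Prop :=
  (∀ B : Idx, pdt (fun y s => xiComp (ξf y s) B) x t
      = ∑ α, pdx α (fun y s => ∑ i, dPhi B i α (ξf y s).1 * vf y s i) x t) ∧
  (∀ i, pdt (fun y s => vf y s i) x t
      = ∑ α, pdx α (fun y s =>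
          ∑ B : Idx, dXi B ψ (ξf y s) (θf y s) * dPhi B i α (ξf y s).1) x t
        + ∑ α, pdx α (fun y s => Z y s i α) x t) ∧
  (pdt (fun y s => (1/2) * (∑ i, (vf y s i)^2) + eHat ψ (ξf y s) (θf y s)) x t
      = ∑ α, pdx α (fun y s => ∑ i,
          (∑ B : Idx, dXi B ψ (ξf y s) (θf y s) * dPhi B i α (ξf y s).1) * vf y s i) x t
        + ∑ α, pdx α (fun y s => ∑ i, Z y s i α * vf y s i) x t
        + ∑ α, pdx α (fun y s => Q y s α) x t + r x t) ∧
  (∀ i α β, pdx α (fun y s => (ξf y s).1 i β) x t = pdx β (fun y s => (ξf y s).1 i α) x t)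

/-- The entropy production identity for the augmented system. -/
def EntropyIdent (ψ : Xi → ℝ → ℝ) (ξf : Vec3 → ℝ → Xi) (vf : Vec3 → ℝ → Vec3)
    (θf : Vec3 → ℝ → ℝ) (Z : Vec3 → ℝ → Mat3) (Q : Vec3 → ℝ → Vec3)
    (r : Vec3 → ℝ → ℝ) (x : Vec3) (t : ℝ) : Prop :=
  pdt (fun y s => etaHat ψ (ξf y s) (θf y s)) x t
    - ∑ α, pdx α (fun y s => Q y s α / θf y s) x t
  = (∑ α, pdx α θf x t * Q x t α) / (θf x t)^2
    + (∑ α, ∑ i, pdx α (fun y s => vf y s i) x t * Z x t i α) / θf x t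
    + r x t / θf x t

/-- Newtonian viscous stress Z = μ ∇v. -/
def newtonianZ (μ : Mat3 → ℝ → ℝ) (ξf : Vec3 → ℝ → Xi) (vf : Vec3 → ℝ → Vec3)
    (θf : Vec3 → ℝ → ℝ) : Vec3 → ℝ → Mat3 :=
  fun x t i α => μ (ξf x t).1 (θf x t) * pdx α (fun y s => vf y s i) x t

/-- Fourier heat flux Q = k ∇θ. -/
def fourierQ (k : Mat3 → ℝ → ℝ) (ξf : Vec3 → ℝ → Xi)
    (θf : Vec3 → ℝ → ℝ) : Vec3 → ℝ → Vec3 :=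
  fun x t α => k (ξf x t).1 (θf x t) * pdx α θf x t

/-- The entropy identity for Newtonian viscosity and Fourier heat conduction (zero supply). -/
def EntropyIdentNF (ψ : Xi → ℝ → ℝ) (μ k : Mat3 → ℝ → ℝ) (ξf : Vec3 → ℝ → Xi)
    (vf : Vec3 → ℝ → Vec3) (θf : Vec3 → ℝ → ℝ) (x : Vec3) (t : ℝ) : Prop :=
  pdt (fun y s => etaHat ψ (ξf y s) (θf y s)) x t
    - ∑ α, pdx α (fun y s =>
        k (ξf y s).1 (θf y s) * pdx α θf y s / θf y s) x t
  = k (ξf x t).1 (θf x t) * (∑ α, (pdx α θf x t)^2) / (θf x t)^2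
    + μ (ξf x t).1 (θf x t) *
        (∑ α, ∑ i, (pdx α (fun y s => vf y s i) x t)^2) / θf x t

/-- Fundamental domain of the 3-torus. -/
def Box : Set Vec3 := Set.Icc 0 1

/-- Periodicity in the space variables with period 1. -/
def PeriodicX {E : Type*} (f : Vec3 → ℝ → E) : Prop :=
  ∀ (x : Vec3) (t : ℝ) (α : Fin 3), f (x + Pi.single α 1) t = f x t

/-- C^n regularity of a space-time field. -/
def FieldC {E : Type*} [NormedAddCommGroup E] [NormedSpace ℝ E]
    (n : ℕ) (f : Vec3 → ℝ → E) : Prop :=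
  ContDiff ℝ n (fun p : Vec3 × ℝ => f p.1 p.2)

/-- Spatial integral of the relative entropy at time t. -/
def relEntInt (ψ : Xi → ℝ → ℝ) (ξf : Vec3 → ℝ → Xi) (vf : Vec3 → ℝ → Vec3)
    (θf : Vec3 → ℝ → ℝ) (ξf' : Vec3 → ℝ → Xi) (vf' : Vec3 → ℝ → Vec3)
    (θf' : Vec3 → ℝ → ℝ) (t : ℝ) : ℝ :=
  ∫ x in Box, relEnt ψ (ξf x t) (vf x t) (θf x t) (ξf' x t) (vf' x t) (θf' x t)


/-- Spatial partial derivative of a static field. -/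
def pds (α : Fin 3) (f : Vec3 → ℝ) (x : Vec3) : ℝ :=
  deriv (fun s => f (Function.update x α s)) (x α)

/-- Deformation gradient ∇y of a static map y : ℝ³ → ℝ³. -/
def gradV (y : Vec3 → Vec3) (x : Vec3) : Mat3 :=
  fun i α => pds α (fun z => y z i) x

/-- ∂ψ/∂F_{iα} for ψ = ψ(F,θ). -/
def dFM (i α : Fin 3) (ψ : Mat3 → ℝ → ℝ) (F : Mat3) (θ : ℝ) : ℝ :=
  deriv (fun s => ψ (updMat F i α s) θ) (F i α)

/-- ∂ψ/∂θ for ψ = ψ(F,θ). -/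
def dThM (ψ : Mat3 → ℝ → ℝ) (F : Mat3) (θ : ℝ) : ℝ :=
  deriv (fun s => ψ F s) θ

/-- Index set for the full extended state U = (ξ, v, θ) ∈ ℝ²³. -/
abbrev UIdx := Idx ⊕ (Fin 3 ⊕ Unit)

def uComp (U : FullState) : UIdx → ℝ
  | .inl B => xiComp U.1 B
  | .inr (.inl i) => U.2.1 i
  | .inr (.inr _) => U.2.2

def uUpd (U : FullState) : UIdx → ℝ → FullState
  | .inl B, s => (xiUpd U.1 B s, U.2)
  | .inr (.inl i), s => (U.1, Function.update U.2.1 i s, U.2.2)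
  | .inr (.inr _), s => (U.1, U.2.1, s)

/-- Partial derivative in the state variables (ξ,v,θ). -/
def pdU (B : UIdx) (f : FullState → ℝ) (U : FullState) : ℝ :=
  deriv (fun s => f (uUpd U B s)) (uComp U B)

/-- Second partial derivative in the state variables (ξ,v,θ). -/
def pdU2 (A B : UIdx) (f : FullState → ℝ) (U : FullState) : ℝ :=
  pdU A (fun V => pdU B f V) U

/-- Test functions for the weak formulation on T³ × [0,T):
C¹, periodic in x, compactly supported in time in [0,T). -/
def TestFun (T : ℝ) (φ : Vec3 → ℝ → ℝ) : Prop :=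
  ContDiff ℝ 1 (fun p : Vec3 × ℝ => φ p.1 p.2) ∧ PeriodicX φ ∧
  ∃ T' : ℝ, T' < T ∧ ∀ (x : Vec3) (t : ℝ), T' ≤ t → φ x t = 0

/-- The elastic stress Σ_{iα} of the augmented constitutive theory. -/
def SigmaA (ψ : Xi → ℝ → ℝ) (ξ : Xi) (θ : ℝ) (i α : Fin 3) : ℝ :=
  ∑ B : Idx, dXi B ψ ξ θ * dPhi B i α ξ.1


/-!
The relative entropy splits as `I = B + T + ½|v - v̄|²`, where `B` is the Taylor remainder of
`ψ̂(·, θ̄)` between `ξ̄` and `ξ`, and `T = ψ̂(ξ, θ) - ψ̂(ξ, θ̄) + η̂(ξ, θ)(θ - θ̄)` is the Taylor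
remainder of the convex function `-ψ̂(ξ, ·)` between `θ` and `θ̄`. On bounded states the Hessian in
`ξ` and `∂_θ η̂` are bounded below by compactness, so both remainders dominate squares; small `θ` is
harmless, because only the half of the segment from `θ` to `θ̄` that is next to `θ̄` is needed.

For large states one writes instead `I = ê(ξ, θ) - θ̄ η̂(ξ, θ) - (affine in ξ) + ½|v - v̄|²`: the
energy grows like `|ξ|_{p,q,r} + θ^ℓ`, while the other terms in `(ξ, θ)` are of lower order. Since
`(ξ̄, v̄, θ̄)` is bounded, the size of the state dominates that of the difference.
-/

section RealVariable

lemma mul_sub_le_sub_of_convexOn {D : Set ℝ} {f : ℝ → ℝ} {f' x y : ℝ} (hf : ConvexOn ℝ D f)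
    (hx : x ∈ D) (hy : y ∈ D) (hf' : HasDerivAt f f' x) : f' * (y - x) ≤ f y - f x := by
  rcases lt_trichotomy x y with hxy | rfl | hyx
  · have hslope := hf.le_slope_of_hasDerivAt hx hy hxy hf'
    rwa [slope_def_field, le_div_iff₀ (sub_pos.2 hxy)] at hslope
  · simp
  · have hslope := hf.slope_le_of_hasDerivAt hy hx hyx hf'
    rw [slope_def_field, div_le_iff₀ (sub_pos.2 hyx)] at hslope
    linarith

variable {D : Set ℝ} {f f' f'' : ℝ → ℝ} {m x y : ℝ}

lemma half_mul_sq_le_taylor_remainder (hD : Convex ℝ D) (hf : ∀ t ∈ D, HasDerivAt f (f' t) t)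
    (hf' : ∀ t ∈ D, HasDerivAt f' (f'' t) t) (hm : ∀ t ∈ D, m ≤ f'' t) (hx : x ∈ D) (hy : y ∈ D) :
    m / 2 * (y - x) ^ 2 ≤ f y - f x - f' x * (y - x) := by
  have hg : ∀ t ∈ D, HasDerivAt (fun t => f t - m / 2 * t ^ 2) (f' t - m * t) t := fun t ht =>
    ((hf t ht).sub ((hasDerivAt_pow 2 t).const_mul (m / 2))).congr_deriv (by simp; ring)
  have hg' : ∀ t ∈ D, HasDerivAt (fun t => f' t - m * t) (f'' t - m) t := fun t ht =>
    ((hf' t ht).sub ((hasDerivAt_id t).const_mul m)).congr_deriv (by simp)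
  have hconv : ConvexOn ℝ D (fun t => f t - m / 2 * t ^ 2) :=
    convexOn_of_hasDerivWithinAt2_nonneg hD
      (fun t ht => (hg t ht).continuousAt.continuousWithinAt)
      (fun t ht => (hg t (interior_subset ht)).hasDerivWithinAt)
      (fun t ht => (hg' t (interior_subset ht)).hasDerivWithinAt)
      (fun t ht => sub_nonneg.2 (hm t (interior_subset ht)))
  have htangent := mul_sub_le_sub_of_convexOn hconv hx hy (hg x hx)
  linarith

lemma eighth_mul_sq_le_taylor_remainder (hD : Convex ℝ D) (hf : ∀ t ∈ D, HasDerivAt f (f' t) t)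
    (hf' : ∀ t ∈ D, HasDerivAt f' (f'' t) t) (hnonneg : ∀ t ∈ D, 0 ≤ f'' t)
    (hx : x ∈ D) (hy : y ∈ D) (hm : ∀ t ∈ segment ℝ (midpoint ℝ x y) y, m ≤ f'' t) :
    m / 8 * (y - x) ^ 2 ≤ f y - f x - f' x * (y - x) := by
  have hz : midpoint ℝ x y ∈ D := hD.midpoint_mem hx hy
  have hsub : segment ℝ (midpoint ℝ x y) y ⊆ D := hD.segment_subset hz hy
  have hzy := half_mul_sq_le_taylor_remainder (convex_segment _ _) (fun t ht => hf t (hsub ht))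
    (fun t ht => hf' t (hsub ht)) hm (left_mem_segment ℝ _ _) (right_mem_segment ℝ _ _)
  have hxz := half_mul_sq_le_taylor_remainder hD hf hf' hnonneg hx hz
  have hzx := half_mul_sq_le_taylor_remainder hD hf hf' hnonneg hz hx
  have hmid : midpoint ℝ x y = (x + y) / 2 := by
    rw [midpoint_eq_smul_add, smul_eq_mul, invOf_eq_inv, inv_mul_eq_div]
  rw [hmid] at hzy hxz hzx
  have hmono : 0 ≤ (f' ((x + y) / 2) - f' x) * ((x + y) / 2 - x) := by linarith
  linarith [hmono]

lemma le_max_one_of_rpow_le {p R : ℝ} (hp : 1 ≤ p) (h : x ^ p ≤ R) : x ≤ max 1 R := by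
  rcases le_total x 1 with hx | hx
  · exact hx.trans (le_max_left _ _)
  · exact ((Real.self_le_rpow_of_one_le hx hp).trans h).trans (le_max_right _ _)

lemma exists_mul_le_mul_rpow_add {p A ε : ℝ} (hp : 1 < p) (hε : 0 < ε) :
    ∃ C, ∀ x, 0 ≤ x → A * x ≤ ε * x ^ p + C := by
  obtain ⟨T, hT⟩ := eventually_atTop.1
    ((_root_.tendsto_rpow_atTop (sub_pos.2 hp)).eventually_ge_atTop (A / ε))
  refine ⟨|A| * max T 1, fun x hx => ?_⟩
  rcases le_total x (max T 1) with hxT | hxT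
  · calc A * x ≤ |A| * max T 1 := mul_le_mul (le_abs_self A) hxT hx (abs_nonneg A)
      _ ≤ ε * x ^ p + |A| * max T 1 := le_add_of_nonneg_left (by positivity)
  · have hx0 : 0 < x := one_pos.trans_le ((le_max_right _ _).trans hxT)
    calc A * x = ε * (A / ε * x) := by field_simp
      _ ≤ ε * (x ^ (p - 1) * x) := by gcongr; exact hT x ((le_max_left _ _).trans hxT)
      _ = ε * x ^ p := by rw [← Real.rpow_add_one hx0.ne', sub_add_cancel]
      _ ≤ ε * x ^ p + |A| * max T 1 := le_add_of_nonneg_right (by positivity)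

lemma rpow_le_two_rpow_mul_add {p P a b d : ℝ} (hp : 1 ≤ p) (hpP : p ≤ P) (ha : 0 ≤ a) (hb : 0 ≤ b)
    (hd : 0 ≤ d) (h : d ≤ a + b) : d ^ p ≤ 2 ^ (P - 1) * (a ^ p + b ^ p) := by
  lift a to ℝ≥0 using ha
  lift b to ℝ≥0 using hb
  calc d ^ p ≤ (a + b : ℝ) ^ p := Real.rpow_le_rpow hd h (zero_le_one.trans hp)
    _ ≤ 2 ^ (p - 1) * ((a : ℝ) ^ p + (b : ℝ) ^ p) :=
        mod_cast NNReal.rpow_add_le_mul_rpow_add_rpow a b hp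
    _ ≤ 2 ^ (P - 1) * ((a : ℝ) ^ p + (b : ℝ) ^ p) := by gcongr; exact one_le_two

end RealVariable

section QuadraticForms

variable {X : Type*} [TopologicalSpace X] {K : Set X}

lemma exists_pos_mul_norm_sq_le {E : Type*} [NormedAddCommGroup E] [NormedSpace ℝ E]
    [ProperSpace E] (hK : IsCompact K) {Q : X → E → ℝ}
    (hcont : ContinuousOn (Function.uncurry Q) (K ×ˢ Metric.sphere 0 1))
    (hsmul : ∀ x (a : ℝ) u, Q x (a • u) = a ^ 2 * Q x u)
    (hpos : ∀ x ∈ K, ∀ u, u ≠ 0 → 0 < Q x u) :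
    ∃ m, 0 < m ∧ ∀ x ∈ K, ∀ u, m * ‖u‖ ^ 2 ≤ Q x u := by
  obtain ⟨m, hm, hmQ⟩ := (hK.prod (isCompact_sphere (0 : E) 1)).exists_forall_le' hcont
    (a := 0) fun y hy => hpos y.1 hy.1 y.2 (ne_zero_of_mem_unit_sphere ⟨y.2, hy.2⟩)
  refine ⟨m, hm, fun x hx u => ?_⟩
  rcases eq_or_ne u 0 with rfl | hu
  · simpa using (hsmul x 0 0).ge
  · have hunit : ‖u‖⁻¹ • u ∈ Metric.sphere (0 : E) 1 := by
      rw [mem_sphere_zero_iff_norm, norm_smul, norm_inv, norm_norm,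
        inv_mul_cancel₀ (norm_ne_zero_iff.2 hu)]
    have hQ : m ≤ (‖u‖⁻¹) ^ 2 * Q x u := by
      simpa only [Function.uncurry, hsmul] using hmQ (x, ‖u‖⁻¹ • u) ⟨hx, hunit⟩
    rwa [inv_pow, inv_mul_eq_div, le_div_iff₀ (by positivity)] at hQ

lemma exists_pos_mul_sum_sq_le {ι : Type*} [Fintype ι] (hK : IsCompact K) {H : X → ι → ι → ℝ}
    (hcont : ∀ i j, ContinuousOn (fun x => H x i j) K)
    (hpos : ∀ x ∈ K, ∀ u : ι → ℝ, u ≠ 0 → 0 < ∑ i, ∑ j, H x i j * u i * u j) :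
    ∃ m, 0 < m ∧ ∀ x ∈ K, ∀ u : ι → ℝ, m * ∑ i, u i ^ 2 ≤ ∑ i, ∑ j, H x i j * u i * u j := by
  let Q (x : X) (u : EuclideanSpace ℝ ι) : ℝ := ∑ i, ∑ j, H x i j * u i * u j
  have hQcont : ContinuousOn (Function.uncurry Q) (K ×ˢ Metric.sphere 0 1) :=
    continuousOn_finsetSum _ fun i _ => continuousOn_finsetSum _ fun j _ =>
      (((hcont i j).comp continuousOn_fst fun y hy => hy.1).mul (by fun_prop)).mul (by fun_prop)
  have hQsmul x (a : ℝ) u : Q x (a • u) = a ^ 2 * Q x u := by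
    simp only [Q, PiLp.smul_apply, smul_eq_mul, Finset.mul_sum]
    exact Finset.sum_congr rfl fun i _ => Finset.sum_congr rfl fun j _ => by ring
  obtain ⟨m, hm, hmQ⟩ := exists_pos_mul_norm_sq_le hK hQcont hQsmul
    fun x hx u hu => hpos x hx u fun h => hu (PiLp.ext (congrFun h))
  refine ⟨m, hm, fun x hx u => ?_⟩
  simpa only [EuclideanSpace.real_norm_sq_eq] using hmQ x hx (WithLp.toLp 2 u)

end QuadraticForms

section Norms

lemma mnorm_eq_norm (F : Mat3) :
    mnorm F = ‖WithLp.toLp 2 (fun a : Fin 3 × Fin 3 => F a.1 a.2)‖ := by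
  rw [EuclideanSpace.norm_eq, Fintype.sum_prod_type]
  simp only [mnorm, Real.norm_eq_abs, sq_abs]

lemma mnorm_nonneg (F : Mat3) : 0 ≤ mnorm F := Real.sqrt_nonneg _

lemma mnorm_sq (F : Mat3) : mnorm F ^ 2 = ∑ i, ∑ j, F i j ^ 2 :=
  Real.sq_sqrt (by positivity)

lemma vnorm_sq (v : Vec3) : vnorm v ^ 2 = ∑ i, v i ^ 2 :=
  Real.sq_sqrt (by positivity)

lemma vnorm_nonneg (v : Vec3) : 0 ≤ vnorm v := Real.sqrt_nonneg _

lemma mnorm_sub_le (F G : Mat3) : mnorm (F - G) ≤ mnorm F + mnorm G := by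
  simp only [mnorm_eq_norm]
  exact norm_sub_le (WithLp.toLp 2 fun a : Fin 3 × Fin 3 => F a.1 a.2)
    (WithLp.toLp 2 fun a : Fin 3 × Fin 3 => G a.1 a.2)

lemma vnorm_eq_norm (v : Vec3) : vnorm v = ‖WithLp.toLp 2 v‖ := by
  simp only [EuclideanSpace.norm_eq, vnorm, Real.norm_eq_abs, sq_abs]

lemma vnorm_sub_le (v w : Vec3) : vnorm (v - w) ≤ vnorm v + vnorm w := by
  simp only [vnorm_eq_norm]
  exact norm_sub_le (WithLp.toLp 2 v) (WithLp.toLp 2 w)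

lemma vnorm_sq_le (v w : Vec3) : vnorm v ^ 2 ≤ 2 * (vnorm (v - w) ^ 2 + vnorm w ^ 2) := by
  simp only [vnorm_eq_norm]
  exact (pow_le_pow_left₀ (norm_nonneg _)
    (norm_le_norm_sub_add (WithLp.toLp 2 v) (WithLp.toLp 2 w)) 2).trans add_sq_le

lemma norm_le_mnorm (F : Mat3) : ‖F‖ ≤ mnorm F := by
  refine (pi_norm_le_iff_of_nonneg (mnorm_nonneg F)).2 fun i =>
    (pi_norm_le_iff_of_nonneg (mnorm_nonneg F)).2 fun j => ?_
  rw [mnorm_eq_norm]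
  exact PiLp.norm_apply_le (WithLp.toLp 2 fun a : Fin 3 × Fin 3 => F a.1 a.2) (i, j)

lemma xi_norm_le {ξ : Xi} {b : ℝ} (hF : mnorm ξ.1 ≤ b) (hζ : mnorm ξ.2.1 ≤ b)
    (hw : |ξ.2.2| ≤ b) : ‖ξ‖ ≤ b :=
  max_le ((norm_le_mnorm _).trans hF) (max_le ((norm_le_mnorm _).trans hζ) hw)

variable {p q r ℓ : ℝ}

lemma xiNorm_nonneg (ξ : Xi) : 0 ≤ xiNorm p q r ξ :=
  add_nonneg (add_nonneg (Real.rpow_nonneg (mnorm_nonneg _) _)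
    (Real.rpow_nonneg (mnorm_nonneg _) _)) (Real.rpow_nonneg (abs_nonneg _) _)

lemma norm_le_max_one_of_xiNorm_le (hp : 1 ≤ p) (hq : 1 ≤ q) (hr : 1 ≤ r) {ξ : Xi} {R : ℝ}
    (h : xiNorm p q r ξ ≤ R) : ‖ξ‖ ≤ max 1 R := by
  have hF := Real.rpow_nonneg (mnorm_nonneg ξ.1) p
  have hζ := Real.rpow_nonneg (mnorm_nonneg ξ.2.1) q
  have hw := Real.rpow_nonneg (abs_nonneg ξ.2.2) r
  rw [xiNorm] at h
  exact xi_norm_le (le_max_one_of_rpow_le hp (by linarith)) (le_max_one_of_rpow_le hq (by linarith))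
    (le_max_one_of_rpow_le hr (by linarith))

lemma exists_mul_norm_le_mul_xiNorm_add (hp : 1 < p) (hq : 1 < q) (hr : 1 < r) {A ε : ℝ}
    (hA : 0 ≤ A) (hε : 0 < ε) : ∃ C, ∀ ξ : Xi, A * ‖ξ‖ ≤ ε * xiNorm p q r ξ + C := by
  obtain ⟨C₁, hC₁⟩ := exists_mul_le_mul_rpow_add (A := A) hp hε
  obtain ⟨C₂, hC₂⟩ := exists_mul_le_mul_rpow_add (A := A) hq hε
  obtain ⟨C₃, hC₃⟩ := exists_mul_le_mul_rpow_add (A := A) hr hε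
  refine ⟨C₁ + C₂ + C₃, fun ξ => ?_⟩
  have hF := mnorm_nonneg ξ.1
  have hζ := mnorm_nonneg ξ.2.1
  have hw := abs_nonneg ξ.2.2
  calc A * ‖ξ‖ ≤ A * (mnorm ξ.1 + mnorm ξ.2.1 + |ξ.2.2|) := by
        gcongr; exact xi_norm_le (by linarith) (by linarith) (by linarith)
    _ ≤ ε * xiNorm p q r ξ + (C₁ + C₂ + C₃) := by
        rw [xiNorm]; linarith [hC₁ _ hF, hC₂ _ hζ, hC₃ _ hw]

/-- The size `|ξ|_{p,q,r} + |θ|^ℓ + |v|²` of a state `(ξ, v, θ)`, or of a difference of states. -/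
def stateSize (p q r ℓ : ℝ) (U : FullState) : ℝ :=
  xiNorm p q r U.1 + |U.2.2| ^ ℓ + vnorm U.2.1 ^ 2

lemma stateSize_two (U : FullState) :
    stateSize 2 2 2 2 U = ∑ B, xiComp U.1 B ^ 2 + U.2.2 ^ 2 + vnorm U.2.1 ^ 2 := by
  simp [stateSize, xiNorm, mnorm_sq, xiComp, Fintype.sum_sum_type, Fintype.sum_prod_type,
    add_assoc]

lemma stateSize_mk_sub (p q r ℓ : ℝ) (ξ : Xi) (v : Vec3) (θ : ℝ) (V : FullState) :
    stateSize p q r ℓ ((ξ, v, θ) - V) =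
      mnorm (ξ.1 - V.1.1) ^ p + mnorm (ξ.2.1 - V.1.2.1) ^ q + |ξ.2.2 - V.1.2.2| ^ r
        + |θ - V.2.2| ^ ℓ + ∑ i, (v i - V.2.1 i) ^ 2 := by
  rw [stateSize, vnorm_sq]; rfl

lemma exists_stateSize_sub_le (hp : 1 ≤ p) (hq : 1 ≤ q) (hr : 1 ≤ r) (hℓ : 1 ≤ ℓ) :
    ∃ A, 0 < A ∧ ∀ U V : FullState,
      stateSize p q r ℓ (U - V) ≤ A * (stateSize p q r ℓ U + stateSize p q r ℓ V) := by
  refine ⟨2 ^ (p + q + r + ℓ - 1), by positivity, fun U V => ?_⟩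
  have hF := rpow_le_two_rpow_mul_add (P := p + q + r + ℓ) hp (by linarith)
    (mnorm_nonneg _) (mnorm_nonneg _) (mnorm_nonneg _) (mnorm_sub_le U.1.1 V.1.1)
  have hζ := rpow_le_two_rpow_mul_add (P := p + q + r + ℓ) hq (by linarith)
    (mnorm_nonneg _) (mnorm_nonneg _) (mnorm_nonneg _) (mnorm_sub_le U.1.2.1 V.1.2.1)
  have hw := rpow_le_two_rpow_mul_add (P := p + q + r + ℓ) hr (by linarith)
    (abs_nonneg _) (abs_nonneg _) (abs_nonneg _) (abs_sub U.1.2.2 V.1.2.2)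
  have hθ := rpow_le_two_rpow_mul_add (P := p + q + r + ℓ) hℓ (by linarith)
    (abs_nonneg _) (abs_nonneg _) (abs_nonneg _) (abs_sub U.2.2 V.2.2)
  have hv := rpow_le_two_rpow_mul_add (P := p + q + r + ℓ) one_le_two (by linarith)
    (vnorm_nonneg _) (vnorm_nonneg _) (vnorm_nonneg _) (vnorm_sub_le U.2.1 V.2.1)
  simp only [Real.rpow_two] at hv
  simp only [stateSize, xiNorm, Prod.fst_sub, Prod.snd_sub]
  linarith

lemma exists_stateSize_le_of_mem_Gamma (hp : 0 ≤ p) (hq : 0 ≤ q) (hr : 0 ≤ r) (hℓ : 0 ≤ ℓ)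
    {M δ : ℝ} (hδ : 0 ≤ δ) :
    ∃ S, ∀ V ∈ Gamma M δ, stateSize p q r ℓ V ≤ S := by
  refine ⟨M ^ p + M ^ q + M ^ r + M ^ ℓ + M ^ 2, ?_⟩
  rintro V ⟨hF, hζ, hw, hv, hθδ, hθM⟩
  have hθ : |V.2.2| ≤ M := by rwa [abs_of_nonneg (hδ.trans hθδ)]
  exact add_le_add (add_le_add (add_le_add (add_le_add
    (Real.rpow_le_rpow (mnorm_nonneg _) hF hp) (Real.rpow_le_rpow (mnorm_nonneg _) hζ hq))
    (Real.rpow_le_rpow (abs_nonneg _) hw hr)) (Real.rpow_le_rpow (abs_nonneg _) hθ hℓ))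
    (pow_le_pow_left₀ (vnorm_nonneg _) hv 2)

end Norms

section PartialDerivatives

/-- The linear coordinates `ξ ↦ (ξ^B)_B` identifying the space of `ξ = (F, ζ, w)` with `ℝ¹⁹`. -/
def xiCoord : Xi ≃ₗ[ℝ] (Idx → ℝ) where
  toFun := xiComp
  invFun u := (fun i α => u (.inl (i, α)), fun i α => u (.inr (.inl (i, α))), u (.inr (.inr ())))
  map_add' _ _ := by ext (_ | _ | _) <;> rfl
  map_smul' _ _ := by ext (_ | _ | _) <;> rfl
  left_inv _ := rfl
  right_inv _ := by ext (_ | _ | _) <;> rfl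

/-- The basis of the space of `ξ = (F, ζ, w)` dual to the components `ξ^B`. -/
def xiBasis : Module.Basis Idx ℝ Xi := .ofEquivFun xiCoord

lemma xiCoord_apply (ξ : Xi) : xiCoord ξ = xiComp ξ := rfl

lemma sum_xiComp_smul_xiBasis (h : Xi) : ∑ B, xiComp h B • xiBasis B = h :=
  xiBasis.sum_equivFun h

lemma xiComp_sub (ξ ξ' : Xi) (B : Idx) : xiComp (ξ - ξ') B = xiComp ξ B - xiComp ξ' B :=
  congrFun (map_sub xiCoord ξ ξ') B

lemma xiComp_xiUpd (ξ : Xi) (B : Idx) (s : ℝ) :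
    xiComp (xiUpd ξ B s) = Function.update (xiComp ξ) B s := by
  ext A
  rcases B with ⟨i, α⟩ | ⟨i, α⟩ | _ <;> rcases A with ⟨j, β⟩ | ⟨j, β⟩ | _ <;>
    simp only [xiUpd, xiComp, updMat, Function.update_apply] <;> grind

lemma xiUpd_eq (ξ : Xi) (B : Idx) (s : ℝ) : xiUpd ξ B s = ξ + (s - xiComp ξ B) • xiBasis B := by
  apply xiCoord.injective
  rw [map_add, map_smul, xiBasis, Module.Basis.coe_ofEquivFun, xiCoord.apply_symm_apply]
  simp only [xiCoord_apply, xiComp_xiUpd]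
  ext A
  rcases eq_or_ne A B with rfl | hAB
  · simp
  · simp [hAB]

/-- The domain `ℝ¹⁹ × (0, ∞)` of the free energy. -/
def thermoDomain : Set (Xi × ℝ) := univ ×ˢ Ioi 0

lemma mem_thermoDomain {x : Xi × ℝ} : x ∈ thermoDomain ↔ 0 < x.2 := by simp [thermoDomain]

lemma isOpen_thermoDomain : IsOpen thermoDomain := isOpen_univ.prod isOpen_Ioi

section Pointwise

variable {f : Xi → ℝ → ℝ} {ξ : Xi} {θ : ℝ}

lemma dXi_eq_fderiv (hf : DifferentiableAt ℝ (Function.uncurry f) (ξ, θ)) (B : Idx) :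
    dXi B f ξ θ = fderiv ℝ (Function.uncurry f) (ξ, θ) (xiBasis B, 0) := by
  have hline : HasDerivAt (fun s => (xiUpd ξ B s, θ)) (xiBasis B, (0 : ℝ)) (xiComp ξ B) := by
    simp only [xiUpd_eq]
    exact ((((hasDerivAt_id _).sub_const _).smul_const (xiBasis B)).const_add ξ |>.congr_deriv
      (one_smul _ _)).prodMk (hasDerivAt_const _ θ)
  have hbase : (ξ, θ) = (xiUpd ξ B (xiComp ξ B), θ) := by simp [xiUpd_eq]
  exact (hf.hasFDerivAt.comp_hasDerivAt_of_eq _ hline hbase).deriv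

lemma sum_dXi_mul_xiComp (hf : DifferentiableAt ℝ (Function.uncurry f) (ξ, θ)) (h : Xi) :
    ∑ B, dXi B f ξ θ * xiComp h B = fderiv ℝ (Function.uncurry f) (ξ, θ) (h, 0) := by
  let L : Xi →L[ℝ] ℝ := (fderiv ℝ (Function.uncurry f) (ξ, θ)).comp (.inl ℝ Xi ℝ)
  calc ∑ B, dXi B f ξ θ * xiComp h B = ∑ B, xiComp h B • L (xiBasis B) :=
        Finset.sum_congr rfl fun B _ => by rw [dXi_eq_fderiv hf, mul_comm]; rfl
    _ = L h := by simp only [← map_smul, ← map_sum, sum_xiComp_smul_xiBasis]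

lemma hasDerivAt_dTh (hf : DifferentiableAt ℝ (Function.uncurry f) (ξ, θ)) :
    HasDerivAt (f ξ) (dTh f ξ θ) θ :=
  DifferentiableAt.hasDerivAt
    (hf.comp θ ((differentiableAt_const ξ).prodMk differentiableAt_id) :)

lemma dTh_eq_fderiv (hf : DifferentiableAt ℝ (Function.uncurry f) (ξ, θ)) :
    dTh f ξ θ = fderiv ℝ (Function.uncurry f) (ξ, θ) (0, 1) :=
  (hf.hasFDerivAt.comp_hasDerivAt θ ((hasDerivAt_const θ ξ).prodMk (hasDerivAt_id θ)) :
    HasDerivAt (f ξ) _ θ).deriv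

lemma hasDerivAt_add_smul {h : Xi} {t : ℝ}
    (hf : DifferentiableAt ℝ (Function.uncurry f) (ξ + t • h, θ)) :
    HasDerivAt (fun s => f (ξ + s • h) θ) (∑ B, dXi B f (ξ + t • h) θ * xiComp h B) t := by
  rw [sum_dXi_mul_xiComp hf]
  have hline : HasDerivAt (fun s : ℝ => (ξ + s • h, θ)) (h, (0 : ℝ)) t :=
    (((hasDerivAt_id t).smul_const h).const_add ξ |>.congr_deriv (one_smul _ _)).prodMk
      (hasDerivAt_const t θ)
  exact hf.hasFDerivAt.comp_hasDerivAt t hline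

end Pointwise

variable {f : Xi → ℝ → ℝ} {m n : WithTop ℕ∞}

lemma differentiableAt_of_contDiffOn_thermoDomain
    (hf : ContDiffOn ℝ n (Function.uncurry f) thermoDomain) (hn : 1 ≤ n) {x : Xi × ℝ}
    (hx : x ∈ thermoDomain) : DifferentiableAt ℝ (Function.uncurry f) x :=
  (hf.differentiableOn (one_pos.trans_le hn).ne').differentiableAt (isOpen_thermoDomain.mem_nhds hx)

lemma contDiffOn_fderiv_apply (hf : ContDiffOn ℝ n (Function.uncurry f) thermoDomain)
    (hmn : m + 1 ≤ n) (u : Xi × ℝ) :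
    ContDiffOn ℝ m (fun x => fderiv ℝ (Function.uncurry f) x u) thermoDomain :=
  (hf.fderiv_of_isOpen isOpen_thermoDomain hmn).clm_apply contDiffOn_const

lemma contDiffOn_dXi (hf : ContDiffOn ℝ n (Function.uncurry f) thermoDomain)
    (hmn : m + 1 ≤ n) (B : Idx) :
    ContDiffOn ℝ m (Function.uncurry (dXi B f)) thermoDomain :=
  (contDiffOn_fderiv_apply hf hmn (xiBasis B, 0)).congr fun _ hx =>
    dXi_eq_fderiv (differentiableAt_of_contDiffOn_thermoDomain hf (le_add_self.trans hmn) hx) B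

lemma contDiffOn_dTh (hf : ContDiffOn ℝ n (Function.uncurry f) thermoDomain)
    (hmn : m + 1 ≤ n) : ContDiffOn ℝ m (Function.uncurry (dTh f)) thermoDomain :=
  (contDiffOn_fderiv_apply hf hmn (0, 1)).congr fun _ hx =>
    dTh_eq_fderiv (differentiableAt_of_contDiffOn_thermoDomain hf (le_add_self.trans hmn) hx)

lemma contDiffOn_etaHat (hf : ContDiffOn ℝ n (Function.uncurry f) thermoDomain)
    (hmn : m + 1 ≤ n) : ContDiffOn ℝ m (Function.uncurry (etaHat f)) thermoDomain :=
  (contDiffOn_dTh hf hmn).neg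

end PartialDerivatives

section BoundedStates

/-- The compact set of pairs `(ξ, θ)` with `‖ξ‖ ≤ b` and `δ ≤ θ ≤ b`. -/
def stateBox (δ b : ℝ) : Set (Xi × ℝ) := Metric.closedBall 0 b ×ˢ Icc δ b

variable {δ b M : ℝ}

lemma isCompact_stateBox (δ b : ℝ) : IsCompact (stateBox δ b) :=
  (isCompact_closedBall 0 b).prod isCompact_Icc

lemma mem_stateBox {ξ : Xi} {θ : ℝ} : (ξ, θ) ∈ stateBox δ b ↔ ‖ξ‖ ≤ b ∧ δ ≤ θ ∧ θ ≤ b := by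
  simp [stateBox]

lemma stateBox_subset_thermoDomain (hδ : 0 < δ) : stateBox δ b ⊆ thermoDomain :=
  fun _ hx => mem_thermoDomain.2 (hδ.trans_le hx.2.1)

lemma mem_stateBox_of_mem_Gamma {U : FullState} (hU : U ∈ Gamma M δ) :
    (U.1, U.2.2) ∈ stateBox δ M :=
  mem_stateBox.2 ⟨xi_norm_le hU.1 hU.2.1 hU.2.2.1, hU.2.2.2.2⟩

lemma norm_le_and_le_max_one_of_xiNorm_add_le {p q r ℓ θ R : ℝ} (hp : 1 ≤ p) (hq : 1 ≤ q)
    (hr : 1 ≤ r) (hℓ : 1 ≤ ℓ) {ξ : Xi} (hθ : 0 ≤ θ) (h : xiNorm p q r ξ + θ ^ ℓ ≤ R) :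
    ‖ξ‖ ≤ max 1 R ∧ θ ≤ max 1 R :=
  ⟨norm_le_max_one_of_xiNorm_le hp hq hr (by linarith [Real.rpow_nonneg hθ ℓ]),
    le_max_one_of_rpow_le hℓ (by linarith [xiNorm_nonneg (p := p) (q := q) (r := r) ξ])⟩

variable {ψ : Xi → ℝ → ℝ}

lemma exists_pos_mul_sum_sq_le_taylor_remainder_xi
    (hψ : ContDiffOn ℝ 2 (Function.uncurry ψ) thermoDomain) (hconv : PsiConvex ψ) (hδ : 0 < δ)
    (b : ℝ) :
    ∃ m, 0 < m ∧ ∀ ξ ξ' θ, (ξ, θ) ∈ stateBox δ b → (ξ', θ) ∈ stateBox δ b →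
      m * ∑ B, xiComp (ξ - ξ') B ^ 2
        ≤ ψ ξ θ - ψ ξ' θ - ∑ B, dXi B ψ ξ' θ * xiComp (ξ - ξ') B := by
  have hdψ B : ContDiffOn ℝ 1 (Function.uncurry (dXi B ψ)) thermoDomain :=
    contDiffOn_dXi hψ one_add_one_eq_two.le B
  have hcont A B : ContinuousOn (fun x : Xi × ℝ => dXi A (dXi B ψ) x.1 x.2) (stateBox δ b) :=
    (contDiffOn_dXi (m := 0) (hdψ B) (zero_add 1).le A).continuousOn.mono
      (stateBox_subset_thermoDomain hδ)
  obtain ⟨m, hm, hmH⟩ := exists_pos_mul_sum_sq_le (isCompact_stateBox δ b) hcont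
    fun x hx => (hconv x.1 x.2 (stateBox_subset_thermoDomain hδ hx).2).1
  refine ⟨m / 2, by positivity, fun ξ ξ' θ hξ hξ' => ?_⟩
  have hbox : ∀ t ∈ Icc (0 : ℝ) 1, (ξ' + t • (ξ - ξ'), θ) ∈ stateBox δ b := fun t ht =>
    ⟨(convex_closedBall (0 : Xi) b).add_smul_sub_mem hξ'.1 hξ.1 ht, hξ.2⟩
  have hdom t ht := stateBox_subset_thermoDomain hδ (hbox t ht)
  have htaylor := half_mul_sq_le_taylor_remainder (m := m * ∑ B, xiComp (ξ - ξ') B ^ 2)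
    (convex_Icc (0 : ℝ) 1)
    (fun t ht => hasDerivAt_add_smul
      (differentiableAt_of_contDiffOn_thermoDomain hψ one_le_two (hdom t ht)))
    (fun t ht => HasDerivAt.fun_sum fun B _ => (hasDerivAt_add_smul
      (differentiableAt_of_contDiffOn_thermoDomain (hdψ B) le_rfl (hdom t ht))).mul_const
        (xiComp (ξ - ξ') B))
    (fun t ht => ?_) (left_mem_Icc.2 zero_le_one) (right_mem_Icc.2 zero_le_one)
  · simp only [zero_smul, add_zero, one_smul, add_sub_cancel, sub_zero, one_pow, mul_one] at htaylor
    linarith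
  · simp only [Finset.sum_mul]
    rw [Finset.sum_comm]
    exact hmH _ (hbox t ht) (xiComp (ξ - ξ'))

lemma exists_pos_mul_sq_le_taylor_remainder_temperature
    (hψ : ContDiffOn ℝ 2 (Function.uncurry ψ) thermoDomain) (hconv : PsiConvex ψ) (hδ : 0 < δ)
    (b : ℝ) :
    ∃ m, 0 < m ∧ ∀ ξ θ θ', 0 < θ → ‖ξ‖ ≤ b → θ ≤ b → θ' ∈ Icc δ b →
      m * (θ - θ') ^ 2 ≤ ψ ξ θ - ψ ξ θ' + etaHat ψ ξ θ * (θ - θ') := by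
  have hη : ContDiffOn ℝ 1 (Function.uncurry (etaHat ψ)) thermoDomain :=
    contDiffOn_etaHat hψ one_add_one_eq_two.le
  have hcont : ContinuousOn (Function.uncurry (dTh (etaHat ψ))) (stateBox (δ / 2) b) :=
    (contDiffOn_dTh (m := 0) hη (zero_add 1).le).continuousOn.mono
      (stateBox_subset_thermoDomain (half_pos hδ))
  obtain ⟨m, hm, hmη⟩ := (isCompact_stateBox (δ / 2) b).exists_forall_le' hcont (a := 0)
    fun x hx => (hconv x.1 x.2 (stateBox_subset_thermoDomain (half_pos hδ) hx).2).2
  refine ⟨m / 8, by positivity, fun ξ θ θ' hθ hξ hθb hθ' => ?_⟩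
  have hsegment : segment ℝ (midpoint ℝ θ θ') θ' ⊆ Icc (δ / 2) b := by
    refine (convex_Icc _ _).segment_subset ?_ ⟨by linarith [hθ'.1], hθ'.2⟩
    rw [midpoint_eq_smul_add, smul_eq_mul, invOf_eq_inv]
    constructor <;> linarith [hθ'.1, hθ'.2]
  have htaylor := eighth_mul_sq_le_taylor_remainder (convex_Ioi 0)
    (fun t ht => (hasDerivAt_dTh (ξ := ξ) (differentiableAt_of_contDiffOn_thermoDomain hψ
      one_le_two (mem_thermoDomain.2 ht))).neg)
    (fun t ht => hasDerivAt_dTh (differentiableAt_of_contDiffOn_thermoDomain hη le_rfl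
      (mem_thermoDomain.2 ht)))
    (fun t ht => (hconv ξ t ht).2.le) hθ (hδ.trans_le hθ'.1)
    (fun t ht => hmη (ξ, t) (mem_stateBox.2 ⟨hξ, hsegment ht⟩))
  simp only [Pi.neg_apply] at htaylor
  rw [etaHat]
  linarith

lemma relEnt_eq_taylor_remainders (ψ : Xi → ℝ → ℝ) (ξ ξ' : Xi) (v v' : Vec3) (θ θ' : ℝ) :
    relEnt ψ ξ v θ ξ' v' θ' =
      (ψ ξ θ' - ψ ξ' θ' - ∑ B, dXi B ψ ξ' θ' * xiComp (ξ - ξ') B)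
        + (ψ ξ θ - ψ ξ θ' + etaHat ψ ξ θ * (θ - θ')) + vnorm (v - v') ^ 2 / 2 := by
  simp only [relEnt, psiRel, vnorm_sq, xiComp_sub, Pi.sub_apply]
  ring

theorem exists_pos_mul_stateSize_two_sub_le_relEnt {p q r ℓ : ℝ}
    (hψ : ContDiffOn ℝ 2 (Function.uncurry ψ) thermoDomain) (hconv : PsiConvex ψ)
    (hp : 1 ≤ p) (hq : 1 ≤ q) (hr : 1 ≤ r) (hℓ : 1 ≤ ℓ) (M : ℝ) (hδ : 0 < δ) (R : ℝ) :
    ∃ K, 0 < K ∧ ∀ (ξ : Xi) (v : Vec3) (θ : ℝ), 0 < θ → stateSize p q r ℓ (ξ, v, θ) ≤ R →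
      ∀ U' ∈ Gamma M δ,
        K * stateSize 2 2 2 2 ((ξ, v, θ) - U') ≤ relEnt ψ ξ v θ U'.1 U'.2.1 U'.2.2 := by
  obtain ⟨m₁, hm₁, hremξ⟩ :=
    exists_pos_mul_sum_sq_le_taylor_remainder_xi hψ hconv hδ (max (max 1 R) M)
  obtain ⟨m₂, hm₂, hremθ⟩ :=
    exists_pos_mul_sq_le_taylor_remainder_temperature hψ hconv hδ (max (max 1 R) M)
  obtain ⟨K, hK, hKm⟩ := exists_between (lt_min (lt_min hm₁ hm₂) one_half_pos)
  obtain ⟨hKm, hKhalf⟩ := lt_min_iff.1 hKm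
  obtain ⟨hKm₁, hKm₂⟩ := lt_min_iff.1 hKm
  refine ⟨K, hK, fun ξ v θ hθ hsize U' hU' => ?_⟩
  obtain ⟨hξ, hθR⟩ := norm_le_and_le_max_one_of_xiNorm_add_le (R := R) hp hq hr hℓ hθ.le <| by
    rw [stateSize, abs_of_pos hθ] at hsize
    linarith [sq_nonneg (vnorm v)]
  obtain ⟨hξ', hδθ', hθ'⟩ := mem_stateBox.1 (mem_stateBox_of_mem_Gamma hU')
  have hξrem := hremξ ξ U'.1 U'.2.2
    (mem_stateBox.2 ⟨le_max_of_le_left hξ, hδθ', le_max_of_le_right hθ'⟩)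
    (mem_stateBox.2 ⟨le_max_of_le_right hξ', hδθ', le_max_of_le_right hθ'⟩)
  have hθrem := hremθ ξ θ U'.2.2 hθ (le_max_of_le_left hξ) (le_max_of_le_left hθR)
    ⟨hδθ', le_max_of_le_right hθ'⟩
  calc K * stateSize 2 2 2 2 ((ξ, v, θ) - U')
      = K * ∑ B, xiComp (ξ - U'.1) B ^ 2 + K * (θ - U'.2.2) ^ 2
          + K * vnorm (v - U'.2.1) ^ 2 := by
        rw [stateSize_two, mul_add, mul_add]; rfl
    _ ≤ m₁ * ∑ B, xiComp (ξ - U'.1) B ^ 2 + m₂ * (θ - U'.2.2) ^ 2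
          + 1 / 2 * vnorm (v - U'.2.1) ^ 2 := by gcongr
    _ ≤ relEnt ψ ξ v θ U'.1 U'.2.1 U'.2.2 := by rw [relEnt_eq_taylor_remainders]; linarith

end BoundedStates

section LargeStates

variable {ψ : Xi → ℝ → ℝ} {p q r ℓ M δ : ℝ}

lemma strictMonoOn_etaHat (hconv : PsiConvex ψ) (ξ : Xi) : StrictMonoOn (etaHat ψ ξ) (Ioi 0) := by
  have hpos : ∀ t ∈ Ioi (0 : ℝ), 0 < deriv (etaHat ψ ξ) t := fun t ht => (hconv ξ t ht).2
  refine strictMonoOn_of_deriv_pos (convex_Ioi 0) (fun t ht => ?_)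
    fun t ht => hpos t (interior_subset ht)
  exact (differentiableAt_of_deriv_ne_zero (hpos t ht).ne').continuousAt.continuousWithinAt

lemma exists_etaHat_le (hψ : ContDiffOn ℝ 1 (Function.uncurry ψ) thermoDomain)
    (hconv : PsiConvex ψ) (hp : 1 ≤ p) (hq : 1 ≤ q) (hr : 1 ≤ r) (hℓ : 1 ≤ ℓ)
    (hgrowth : ∀ ε : ℝ, 0 < ε → ∃ R, ∀ ξ θ, 0 < θ → R < xiNorm p q r ξ + θ ^ ℓ →
      etaHat ψ ξ θ ≤ ε * (xiNorm p q r ξ + θ ^ ℓ)) {ε : ℝ} (hε : 0 < ε) :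
    ∃ C, 0 ≤ C ∧ ∀ ξ θ, 0 < θ → etaHat ψ ξ θ ≤ ε * (xiNorm p q r ξ + θ ^ ℓ) + C := by
  obtain ⟨R, hR⟩ := hgrowth ε hε
  have hb : 0 < max 1 R := lt_max_of_lt_left one_pos
  obtain ⟨C, hC⟩ := (isCompact_stateBox (max 1 R) (max 1 R)).exists_bound_of_continuousOn
    ((contDiffOn_etaHat (m := 0) hψ (zero_add 1).le).continuousOn.mono
      (stateBox_subset_thermoDomain hb))
  refine ⟨|C|, abs_nonneg C, fun ξ θ hθ => ?_⟩
  have hN : 0 ≤ xiNorm p q r ξ + θ ^ ℓ := add_nonneg (xiNorm_nonneg ξ) (Real.rpow_nonneg hθ.le ℓ)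
  rcases lt_or_ge R (xiNorm p q r ξ + θ ^ ℓ) with hlarge | hsmall
  · exact (hR ξ θ hθ hlarge).trans (le_add_of_nonneg_right (abs_nonneg C))
  · obtain ⟨hξ, hθb⟩ := norm_le_and_le_max_one_of_xiNorm_add_le hp hq hr hℓ hθ.le hsmall
    calc etaHat ψ ξ θ ≤ etaHat ψ ξ (max 1 R) := (strictMonoOn_etaHat hconv ξ).monotoneOn hθ hb hθb
      _ ≤ |etaHat ψ ξ (max 1 R)| := le_abs_self _
      _ ≤ |C| := (hC (ξ, max 1 R) (mem_stateBox.2 ⟨hξ, le_rfl, le_rfl⟩)).trans (le_abs_self C)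
      _ ≤ ε * (xiNorm p q r ξ + θ ^ ℓ) + |C| := le_add_of_nonneg_left (by positivity)

lemma exists_tangent_le (hψ : ContDiffOn ℝ 1 (Function.uncurry ψ) thermoDomain)
    (hp : 1 < p) (hq : 1 < q) (hr : 1 < r) {K : Set (Xi × ℝ)} (hK : IsCompact K)
    (hKdom : K ⊆ thermoDomain) {ε : ℝ} (hε : 0 < ε) :
    ∃ C, ∀ ξ ξ' θ', (ξ', θ') ∈ K →
      ψ ξ' θ' + ∑ B, dXi B ψ ξ' θ' * xiComp (ξ - ξ') B ≤ ε * xiNorm p q r ξ + C := by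
  let L (x : Xi × ℝ) (h : Xi) : ℝ := fderiv ℝ (Function.uncurry ψ) x (h, 0)
  have hfderiv : ContinuousOn (fderiv ℝ (Function.uncurry ψ)) K :=
    (hψ.continuousOn_fderiv_of_isOpen isOpen_thermoDomain le_rfl).mono hKdom
  obtain ⟨G, hG⟩ := hK.exists_bound_of_continuousOn hfderiv
  obtain ⟨D, hD⟩ := hK.exists_bound_of_continuousOn ((hψ.continuousOn.mono hKdom).sub
    (hfderiv.clm_apply (continuous_fst.prodMk continuous_const).continuousOn :
      ContinuousOn (fun x => L x x.1) K))
  obtain ⟨C, hC⟩ := exists_mul_norm_le_mul_xiNorm_add hp hq hr (abs_nonneg G) hε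
  refine ⟨D + C, fun ξ ξ' θ' hx => ?_⟩
  have hnorm : L (ξ', θ') ξ ≤ |G| * ‖ξ‖ := by
    refine (le_abs_self _).trans ((ContinuousLinearMap.le_of_opNorm_le _
      ((hG _ hx).trans (le_abs_self G)) _).trans_eq ?_)
    simp
  have hsub : L (ξ', θ') (ξ - ξ') = L (ξ', θ') ξ - L (ξ', θ') ξ' := by
    simp only [L, ← map_sub, Prod.mk_sub_mk, sub_zero]
  calc ψ ξ' θ' + ∑ B, dXi B ψ ξ' θ' * xiComp (ξ - ξ') B
      = (ψ ξ' θ' - L (ξ', θ') ξ') + L (ξ', θ') ξ := by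
        rw [sum_dXi_mul_xiComp
          (differentiableAt_of_contDiffOn_thermoDomain hψ le_rfl (hKdom hx))]
        linarith
    _ ≤ D + |G| * ‖ξ‖ := add_le_add ((le_abs_self _).trans (hD _ hx)) hnorm
    _ ≤ ε * xiNorm p q r ξ + (D + C) := by linarith [hC ξ]

lemma relEnt_eq_energy_sub_tangent (ψ : Xi → ℝ → ℝ) (ξ ξ' : Xi) (v v' : Vec3) (θ θ' : ℝ) :
    relEnt ψ ξ v θ ξ' v' θ' =
      eHat ψ ξ θ - θ' * etaHat ψ ξ θ - (ψ ξ' θ' + ∑ B, dXi B ψ ξ' θ' * xiComp (ξ - ξ') B)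
        + vnorm (v - v') ^ 2 / 2 := by
  simp only [relEnt, psiRel, eHat, etaHat, vnorm_sq, xiComp_sub, Pi.sub_apply]
  ring

theorem exists_mul_stateSize_le_relEnt_add {c : ℝ}
    (hψ : ContDiffOn ℝ 1 (Function.uncurry ψ) thermoDomain) (hconv : PsiConvex ψ) (hc : 0 < c)
    (henergy : ∀ ξ θ, 0 < θ → c * (xiNorm p q r ξ + θ ^ ℓ) - c ≤ eHat ψ ξ θ)
    (hentropy : ∀ ε : ℝ, 0 < ε → ∃ R, ∀ ξ θ, 0 < θ → R < xiNorm p q r ξ + θ ^ ℓ →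
      etaHat ψ ξ θ ≤ ε * (xiNorm p q r ξ + θ ^ ℓ))
    (hp : 1 < p) (hq : 1 < q) (hr : 1 < r) (hℓ : 1 ≤ ℓ) (hM : 0 < M) (hδ : 0 < δ) :
    ∃ κ C, 0 < κ ∧ ∀ (ξ : Xi) (v : Vec3) (θ : ℝ), 0 < θ → ∀ U' ∈ Gamma M δ,
      κ * stateSize p q r ℓ (ξ, v, θ) ≤ relEnt ψ ξ v θ U'.1 U'.2.1 U'.2.2 + C := by
  obtain ⟨C₁, hC₁, hη⟩ := exists_etaHat_le hψ hconv hp.le hq.le hr.le hℓ hentropy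
    (show 0 < c / (4 * M) by positivity)
  obtain ⟨C₂, htangent⟩ := exists_tangent_le hψ hp hq hr (isCompact_stateBox δ M)
    (stateBox_subset_thermoDomain hδ) (show 0 < c / 4 by positivity)
  refine ⟨min (c / 2) (1 / 4), c + M * C₁ + C₂ + M ^ 2 / 2, by positivity,
    fun ξ v θ hθ U' hU' => ?_⟩
  obtain ⟨-, -, -, hv', hδθ', hθ'⟩ := id hU'
  have hθℓ : 0 ≤ θ ^ ℓ := Real.rpow_nonneg hθ.le ℓ
  have hN : 0 ≤ xiNorm p q r ξ + θ ^ ℓ := add_nonneg (xiNorm_nonneg ξ) hθℓ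
  have hη' : U'.2.2 * etaHat ψ ξ θ ≤ c / 4 * (xiNorm p q r ξ + θ ^ ℓ) + M * C₁ :=
    calc U'.2.2 * etaHat ψ ξ θ ≤ U'.2.2 * (c / (4 * M) * (xiNorm p q r ξ + θ ^ ℓ) + C₁) :=
          mul_le_mul_of_nonneg_left (hη ξ θ hθ) (hδ.le.trans hδθ')
      _ ≤ M * (c / (4 * M) * (xiNorm p q r ξ + θ ^ ℓ) + C₁) := by gcongr
      _ = c / 4 * (xiNorm p q r ξ + θ ^ ℓ) + M * C₁ := by field_simp
  have hv : vnorm v ^ 2 ≤ 2 * (vnorm (v - U'.2.1) ^ 2 + M ^ 2) :=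
    (vnorm_sq_le v U'.2.1).trans (by gcongr; exact vnorm_nonneg _)
  calc min (c / 2) (1 / 4) * stateSize p q r ℓ (ξ, v, θ)
      = min (c / 2) (1 / 4) * (xiNorm p q r ξ + θ ^ ℓ) + min (c / 2) (1 / 4) * vnorm v ^ 2 := by
        rw [stateSize, abs_of_pos hθ, mul_add]
    _ ≤ c / 2 * (xiNorm p q r ξ + θ ^ ℓ) + 1 / 4 * vnorm v ^ 2 := by
        gcongr
        exacts [min_le_left _ _, min_le_right _ _]
    _ ≤ relEnt ψ ξ v θ U'.1 U'.2.1 U'.2.2 + (c + M * C₁ + C₂ + M ^ 2 / 2) := by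
        rw [relEnt_eq_energy_sub_tangent]
        have hcθ : 0 ≤ c / 4 * θ ^ ℓ := by positivity
        linarith [henergy ξ θ hθ, htangent ξ U'.1 U'.2.2 (mem_stateBox_of_mem_Gamma hU')]

theorem exists_pos_mul_stateSize_sub_le_relEnt {c : ℝ}
    (hψ : ContDiffOn ℝ 1 (Function.uncurry ψ) thermoDomain) (hconv : PsiConvex ψ) (hc : 0 < c)
    (henergy : ∀ ξ θ, 0 < θ → c * (xiNorm p q r ξ + θ ^ ℓ) - c ≤ eHat ψ ξ θ)
    (hentropy : ∀ ε : ℝ, 0 < ε → ∃ R, ∀ ξ θ, 0 < θ → R < xiNorm p q r ξ + θ ^ ℓ →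
      etaHat ψ ξ θ ≤ ε * (xiNorm p q r ξ + θ ^ ℓ))
    (hp : 1 < p) (hq : 1 < q) (hr : 1 < r) (hℓ : 1 ≤ ℓ) (hM : 0 < M) (hδ : 0 < δ) :
    ∃ R K, 0 < K ∧ ∀ (ξ : Xi) (v : Vec3) (θ : ℝ), 0 < θ → R < stateSize p q r ℓ (ξ, v, θ) →
      ∀ U' ∈ Gamma M δ,
        K * stateSize p q r ℓ ((ξ, v, θ) - U') ≤ relEnt ψ ξ v θ U'.1 U'.2.1 U'.2.2 := by
  obtain ⟨κ, C, hκ, hlower⟩ :=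
    exists_mul_stateSize_le_relEnt_add hψ hconv hc henergy hentropy hp hq hr hℓ hM hδ
  obtain ⟨S, hS⟩ := exists_stateSize_le_of_mem_Gamma (p := p) (q := q) (r := r) (ℓ := ℓ) (M := M)
    (by linarith) (by linarith) (by linarith) (by linarith) hδ.le
  obtain ⟨A, hA, hsub⟩ := exists_stateSize_sub_le hp.le hq.le hr.le hℓ
  refine ⟨2 * C / κ + S, κ / (2 * A), by positivity, fun ξ v θ hθ hR U' hU' => ?_⟩
  have hC : 2 * C < κ * (stateSize p q r ℓ (ξ, v, θ) - S) := by
    rwa [← lt_sub_iff_add_lt, div_lt_iff₀' hκ] at hR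
  calc κ / (2 * A) * stateSize p q r ℓ ((ξ, v, θ) - U')
      ≤ κ / (2 * A) * (A * (stateSize p q r ℓ (ξ, v, θ) + S)) := by
        gcongr
        exact (hsub _ _).trans (by gcongr; exact hS U' hU')
    _ = κ * (stateSize p q r ℓ (ξ, v, θ) + S) / 2 := by field_simp
    _ ≤ κ * stateSize p q r ℓ (ξ, v, θ) - C := by linarith
    _ ≤ relEnt ψ ξ v θ U'.1 U'.2.1 U'.2.2 := by linarith [hlower ξ v θ hθ U' hU']

end LargeStates

theorem coercivity_relative_entropy_differences_general
    (ψ : Xi → ℝ → ℝ) (c p q r ℓ : ℝ)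
    (hψ : ContDiffOn ℝ 2 (Function.uncurry ψ) thermoDomain) (hconv : PsiConvex ψ) (hc : 0 < c)
    (henergy : ∀ ξ θ, 0 < θ → c * (xiNorm p q r ξ + θ ^ ℓ) - c ≤ eHat ψ ξ θ)
    (hentropy : ∀ ε : ℝ, 0 < ε → ∃ R, ∀ ξ θ, 0 < θ → R < xiNorm p q r ξ + θ ^ ℓ →
      etaHat ψ ξ θ ≤ ε * (xiNorm p q r ξ + θ ^ ℓ))
    (hp : 1 < p) (hq : 1 < q) (hr : 1 < r) (hℓ : 1 ≤ ℓ)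
    (M δ : ℝ) (hM : 0 < M) (hδ : 0 < δ) :
    ∃ R K₁ K₂ : ℝ, 0 < K₁ ∧ 0 < K₂ ∧
      ∀ (ξ : Xi) (v : Vec3) (θ : ℝ), 0 < θ → ∀ U' ∈ Gamma M δ,
        (R < xiNorm p q r ξ + θ ^ ℓ + (vnorm v)^2 →
          K₁ / 4 * (mnorm (ξ.1 - U'.1.1) ^ p + mnorm (ξ.2.1 - U'.1.2.1) ^ q
              + |ξ.2.2 - U'.1.2.2| ^ r + |θ - U'.2.2| ^ ℓ
              + ∑ i, (v i - U'.2.1 i)^2)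
            ≤ relEnt ψ ξ v θ U'.1 U'.2.1 U'.2.2) ∧
        (xiNorm p q r ξ + θ ^ ℓ + (vnorm v)^2 ≤ R →
          K₂ * (mnorm (ξ.1 - U'.1.1)^2 + mnorm (ξ.2.1 - U'.1.2.1)^2
              + (ξ.2.2 - U'.1.2.2)^2 + (θ - U'.2.2)^2
              + ∑ i, (v i - U'.2.1 i)^2)
            ≤ relEnt ψ ξ v θ U'.1 U'.2.1 U'.2.2) := by
  have hsize (ξ : Xi) (v : Vec3) {θ : ℝ} (hθ : 0 < θ) :
      stateSize p q r ℓ (ξ, v, θ) = xiNorm p q r ξ + θ ^ ℓ + vnorm v ^ 2 := by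
    rw [stateSize, abs_of_pos hθ]
  obtain ⟨R, K, hK, hlarge⟩ := exists_pos_mul_stateSize_sub_le_relEnt (hψ.of_le one_le_two)
    hconv hc henergy hentropy hp hq hr hℓ hM hδ
  obtain ⟨K₂, hK₂, hbounded⟩ := exists_pos_mul_stateSize_two_sub_le_relEnt hψ hconv
    hp.le hq.le hr.le hℓ M hδ R
  refine ⟨R, 4 * K, K₂, by positivity, hK₂, fun ξ v θ hθ U' hU' => ⟨fun h => ?_, fun h => ?_⟩⟩
  · rw [mul_div_cancel_left₀ K four_ne_zero]
    exact (stateSize_mk_sub p q r ℓ ξ v θ U' ▸ hlarge ξ v θ hθ (hsize ξ v hθ ▸ h) U' hU' :)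
  · have hquad := hbounded ξ v θ hθ (hsize ξ v hθ ▸ h) U' hU'
    simpa only [stateSize_mk_sub, Real.rpow_two, sq_abs] using hquad

/-- Appendix Lemma A.2(3), coercivity of the relative entropy
in the difference variables. -/
theorem coercivity_relative_entropy_differences
    (ψ : Xi → ℝ → ℝ) (c p q r ℓ : ℝ)
    (hψ3 : PsiC3 ψ) (hconv : PsiConvex ψ)
    (hgrow : GrowthCond ψ c p q r ℓ)
    (hp : 4 ≤ p) (hq : 1 < q) (hr : 1 < r) (hl : 1 < ℓ)
    (M δ : ℝ) (hM : 0 < M) (hδ : 0 < δ) :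
    ∃ R K₁ K₂ : ℝ, 0 < K₁ ∧ 0 < K₂ ∧
      ∀ (ξ : Xi) (v : Vec3) (θ : ℝ), 0 < θ → ∀ U' ∈ Gamma M δ,
        (R < xiNorm p q r ξ + θ ^ ℓ + (vnorm v)^2 →
          K₁ / 4 * (mnorm (ξ.1 - U'.1.1) ^ p + mnorm (ξ.2.1 - U'.1.2.1) ^ q
              + |ξ.2.2 - U'.1.2.2| ^ r + |θ - U'.2.2| ^ ℓ
              + ∑ i, (v i - U'.2.1 i)^2)
            ≤ relEnt ψ ξ v θ U'.1 U'.2.1 U'.2.2) ∧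
        (xiNorm p q r ξ + θ ^ ℓ + (vnorm v)^2 ≤ R →
          K₂ * (mnorm (ξ.1 - U'.1.1)^2 + mnorm (ξ.2.1 - U'.1.2.1)^2
              + (ξ.2.2 - U'.1.2.2)^2 + (θ - U'.2.2)^2
              + ∑ i, (v i - U'.2.1 i)^2)
            ≤ relEnt ψ ξ v θ U'.1 U'.2.1 U'.2.2) := by
  exact coercivity_relative_entropy_differences_general ψ c p q r ℓ (hψ3.of_le (by norm_num))
    hconv hgrow.1 (fun ξ θ hθ => (hgrow.2.1 ξ θ hθ).1)
    (fun ε hε => (hgrow.2.2.2 ε hε).imp fun R hR ξ θ hθ h => (neg_le_abs _).trans (hR ξ θ hθ h))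
    (by linarith) hq hr hl.le M δ hM hδ

end
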